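/- arXiv:math/9907164 — 2 statements merged into one kernel-verified Lean document; each statement's English description precedes it below -/
import Mathlib

section
/- Let U be an open subset of ℝⁿ, π₁ : U × ℝⁿ → U the projection onto the first factor, and β a smooth closed 1-form on U × ℝⁿ such that the restriction of β to every fiber π₁⁻¹(u) = {u} × ℝⁿ vanishes. Then β = π₁*(β₁) for some closed 1-form β₁ on U. -/
/-!
Reshetikhin–Yakimov, Lemma 3.3 (ii):  a smooth closed `1`-form on `U × ℝⁿ` (`U ⊆ ℝⁿ`
open) whose restriction to every fiber `{u} × ℝⁿ` vanishes is the pull-back `π₁*(β₁)` of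
a closed `1`-form `β₁` on `U`.

A differential form on the open set `U × ℝⁿ ⊆ ℝⁿ × ℝⁿ` is recorded by its coefficient
functions with respect to the coordinates indexed by `Fin n ⊕ Fin n` (`Sum.inl` for the
base coordinates, `Sum.inr` for the fiber coordinates).
-/

noncomputable section

/-- The standard basis vectors of `ℝⁿ × ℝⁿ`, indexed by `Fin n ⊕ Fin n`. -/
def basisVec (n : ℕ) : Fin n ⊕ Fin n → (Fin n → ℝ) × (Fin n → ℝ)
  | Sum.inl i => (Pi.single i 1, 0)
  | Sum.inr i => (0, Pi.single i 1)

/-- The partial derivative in the `i`-th coordinate direction. -/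
def pd {n : ℕ} (i : Fin n ⊕ Fin n) (f : (Fin n → ℝ) × (Fin n → ℝ) → ℝ)
    (p : (Fin n → ℝ) × (Fin n → ℝ)) : ℝ :=
  fderiv ℝ f p (basisVec n i)

/-- **Lemma 3.3 (ii).** -/
theorem closed_one_form_vanishing_on_fibers_is_pullback
    (n : ℕ) (U : Set (Fin n → ℝ)) (hU : IsOpen U)
    (β : (Fin n ⊕ Fin n) → (Fin n → ℝ) × (Fin n → ℝ) → ℝ)
    (hβ_smooth : ∀ i, ContDiffOn ℝ (⊤ : ℕ∞) (β i) (U ×ˢ (Set.univ : Set (Fin n → ℝ))))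
    -- `dβ = 0`
    (hβ_closed : ∀ i j p, p ∈ U ×ˢ (Set.univ : Set (Fin n → ℝ)) →
      pd i (β j) p = pd j (β i) p)
    -- `β` restricted to every fiber `{u} × ℝⁿ` vanishes
    (hβ_fib : ∀ (j : Fin n) p, p ∈ U ×ˢ (Set.univ : Set (Fin n → ℝ)) →
      β (Sum.inr j) p = 0) :
    ∃ β₁ : Fin n → (Fin n → ℝ) → ℝ,
      (∀ i, ContDiffOn ℝ (⊤ : ℕ∞) (β₁ i) U) ∧
      -- `β₁` is closed on `U`
      (∀ (i j : Fin n) (x : Fin n → ℝ), x ∈ U →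
        fderiv ℝ (β₁ i) x (Pi.single j 1) = fderiv ℝ (β₁ j) x (Pi.single i 1)) ∧
      -- `β = π₁*(β₁)`
      (∀ (i : Fin n) p, p ∈ U ×ˢ (Set.univ : Set (Fin n → ℝ)) →
        β (Sum.inl i) p = β₁ i p.1) := by
  have hopen : IsOpen (U ×ˢ (Set.univ : Set (Fin n → ℝ))) := hU.prod isOpen_univ
  have hdiff : ∀ i p, p ∈ U ×ˢ (Set.univ : Set (Fin n → ℝ)) → DifferentiableAt ℝ (β i) p :=
    fun i p hp => ((hβ_smooth i).contDiffAt (hopen.mem_nhds hp)).differentiableAt (by simp)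
  have hz : ∀ (i j : Fin n) p, p ∈ U ×ˢ (Set.univ : Set (Fin n → ℝ)) →
      fderiv ℝ (β (Sum.inl i)) p (0, Pi.single j 1) = 0 := by
    intro i j p hp
    have h := hβ_closed (Sum.inr j) (Sum.inl i) p hp
    have h2 : β (Sum.inr j) =ᶠ[nhds p] fun _ => (0 : ℝ) := by
      filter_upwards [hopen.mem_nhds hp] with q hq using hβ_fib j q hq
    simp only [pd, h2.fderiv_eq] at h
    simpa [basisVec] using h
  have hconst : ∀ (i : Fin n) (u : Fin n → ℝ), u ∈ U → ∀ y : Fin n → ℝ,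
      β (Sum.inl i) (u, y) = β (Sum.inl i) (u, 0) := by
    intro i u hu y
    have hd : ∀ y : Fin n → ℝ, HasFDerivAt (fun y => β (Sum.inl i) (u, y))
        ((fderiv ℝ (β (Sum.inl i)) (u, y)).comp
          (ContinuousLinearMap.inr ℝ (Fin n → ℝ) (Fin n → ℝ))) y := by
      intro y
      exact (hdiff (Sum.inl i) (u, y) ⟨hu, trivial⟩).hasFDerivAt.comp y
        (hasFDerivAt_prodMk_right u y)
    refine is_const_of_fderiv_eq_zero (𝕜 := ℝ) (f := fun y => β (Sum.inl i) (u, y))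
      (fun y => (hd y).differentiableAt) (fun y => ?_) y 0
    rw [(hd y).fderiv]
    apply ContinuousLinearMap.coe_injective
    refine (Pi.basisFun ℝ (Fin n)).ext fun j => ?_
    simpa using hz i j (u, y) ⟨hu, trivial⟩
  have hd1 : ∀ (i j : Fin n) (x : Fin n → ℝ), x ∈ U →
      fderiv ℝ (fun x => β (Sum.inl i) (x, 0)) x (Pi.single j 1)
        = pd (Sum.inl j) (β (Sum.inl i)) (x, 0) := by
    intro i j x hx
    have h : HasFDerivAt (fun x => β (Sum.inl i) (x, 0))
        ((fderiv ℝ (β (Sum.inl i)) (x, 0)).comp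
          (ContinuousLinearMap.inl ℝ (Fin n → ℝ) (Fin n → ℝ))) x :=
      (hdiff (Sum.inl i) (x, 0) ⟨hx, trivial⟩).hasFDerivAt.comp x
        (hasFDerivAt_prodMk_left x 0)
    rw [h.fderiv]
    simp [pd, basisVec]
  refine ⟨fun i x => β (Sum.inl i) (x, 0), fun i => ?_, fun i j x hx => ?_, fun i p hp => ?_⟩
  · exact (hβ_smooth (Sum.inl i)).comp (contDiff_prodMk_left 0).contDiffOn
      (fun x hx => ⟨hx, trivial⟩)
  · rw [hd1 i j x hx, hd1 j i x hx]
    exact hβ_closed _ _ _ ⟨hx, trivial⟩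
  · exact hconst i p.1 hp.1 p.2
end
end

section
/- Let 0 ≤ k ≤ n and let g₁, …, g_n : ℝⁿ → ℝ be smooth functions, each invariant under translations by the lattice ℤᵏ spanned by the first k standard basis vectors, such that the 1-form Σ_j g_j dxʲ is closed (i.e. ∂g_j/∂xˡ = ∂g_l/∂xʲ for all j, l). Then there exist real constants a₁, …, a_k and a smooth ℤᵏ-invariant function h : ℝⁿ → ℝ such that g_j = a_j + ∂h/∂xʲ for j = 1, …, k and g_j = ∂h/∂xʲ for j = k+1, …, n; that is, Σ_j g_j dxʲ = Σ_{j=1}^{k} a_j dxʲ + dh with dh having ℤᵏ-periodic potential. -/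
/-!
Every closed `ℤᵏ`-periodic `1`-form `Σ_j g_j dxʲ` on `ℝⁿ` (periodic in the first `k`
coordinates) is the sum of a constant-coefficient form `Σ_{j≤k} a_j dxʲ` and the
differential `dh` of a `ℤᵏ`-periodic function; this is the statement that every closed
`1`-form on `ℝ^{n−k} × (ℝᵏ/ℤᵏ)` is cohomologous to one with constant coefficients in the
angle differentials.
-/

noncomputable section

/-- **Closed periodic 1-forms.** -/
theorem closed_periodic_one_form_eq_const_add_exact
    (n k : ℕ) (hk : k ≤ n)
    (g : Fin n → (Fin n → ℝ) → ℝ)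
    (hg_smooth : ∀ j, ContDiff ℝ (⊤ : ℕ∞) (g j))
    -- invariance under the lattice `ℤᵏ` spanned by the first `k` basis vectors
    (hg_per : ∀ (j i : Fin n), (i : ℕ) < k →
      ∀ x, g j (x + Pi.single i 1) = g j x)
    -- closedness: `∂g_j/∂xˡ = ∂g_l/∂xʲ`
    (hg_closed : ∀ (j l : Fin n) (x : Fin n → ℝ),
      fderiv ℝ (g j) x (Pi.single l 1) = fderiv ℝ (g l) x (Pi.single j 1)) :
    ∃ (a : Fin n → ℝ) (h : (Fin n → ℝ) → ℝ),
      ContDiff ℝ (⊤ : ℕ∞) h ∧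
      -- `h` is `ℤᵏ`-invariant
      (∀ (i : Fin n), (i : ℕ) < k → ∀ x, h (x + Pi.single i 1) = h x) ∧
      -- only `a₁, …, a_k` occur
      (∀ j : Fin n, k ≤ (j : ℕ) → a j = 0) ∧
      -- `g_j = a_j + ∂h/∂xʲ`
      (∀ (j : Fin n) (x : Fin n → ℝ),
        g j x = a j + fderiv ℝ h x (Pi.single j 1)) := by
  classical
  let P : Fin n → ((Fin n → ℝ) →L[ℝ] ℝ) := fun j => ContinuousLinearMap.proj j
  let ω : (Fin n → ℝ) → ((Fin n → ℝ) →L[ℝ] ℝ) := fun x => ∑ j, g j x • P j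
  have hω_apply : ∀ x y, ω x y = ∑ j, g j x * y j := by
    intro x y
    simp [ω, P]
  have hω : ContDiff ℝ (⊤ : ℕ∞) ω :=
    ContDiff.sum fun j _ => (hg_smooth j).smul contDiff_const
  have hgd : ∀ j, Differentiable ℝ (g j) := fun j => (hg_smooth j).differentiable (by simp)
  have hωd : ∀ x, HasFDerivAt ω (∑ j, (fderiv ℝ (g j) x).smulRight (P j)) x := by
    intro x
    exact HasFDerivAt.fun_sum fun j _ => ((hgd j x).hasFDerivAt).smul_const (P j)
  have hexp : ∀ (j : Fin n) (a x : Fin n → ℝ),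
      fderiv ℝ (g j) a x = ∑ l, x l * fderiv ℝ (g j) a (Pi.single l 1) := by
    intro j a x
    conv_lhs => rw [pi_eq_sum_univ' x]
    simp [map_sum]
  have hsymm : ∀ a x y, fderiv ℝ ω a x y = fderiv ℝ ω a y x := by
    intro a x y
    have key : ∀ x y, fderiv ℝ ω a x y
        = ∑ j, ∑ l, x l * y j * fderiv ℝ (g j) a (Pi.single l 1) := by
      intro x y
      rw [(hωd a).fderiv]
      simp only [ContinuousLinearMap.sum_apply, ContinuousLinearMap.smulRight_apply,
        ContinuousLinearMap.smul_apply, P, ContinuousLinearMap.proj_apply, smul_eq_mul]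
      refine Finset.sum_congr rfl fun j _ => ?_
      rw [hexp, Finset.sum_mul]
      exact Finset.sum_congr rfl fun l _ => by ring
    rw [key, key, Finset.sum_comm]
    refine Finset.sum_congr rfl fun j _ => Finset.sum_congr rfl fun l _ => ?_
    rw [hg_closed l j a]
    ring
  obtain ⟨f, hf⟩ := convex_univ.exists_forall_hasFDerivAt_of_fderiv_symmetric (ω := ω)
    isOpen_univ (hω.differentiable (by simp)).differentiableOn (fun a _ => hsymm a)
  replace hf : ∀ x, HasFDerivAt f (ω x) x := fun x => hf x (Set.mem_univ x)
  have hfs : ContDiff ℝ (⊤ : ℕ∞) f := by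
    refine contDiff_infty_iff_fderiv.2 ⟨fun x => (hf x).differentiableAt, ?_⟩
    rwa [show fderiv ℝ f = ω from funext fun x => (hf x).fderiv]
  have hper : ∀ i : Fin n, (i : ℕ) < k → ∀ x,
      f (x + Pi.single i 1) - f x = f (Pi.single i 1) - f 0 := by
    intro i hi x
    have hd : ∀ x, HasFDerivAt (fun x => f (x + Pi.single i 1) - f x)
        (0 : (Fin n → ℝ) →L[ℝ] ℝ) x := by
      intro x
      have h1 := ((hasFDerivAt_comp_add_right (Pi.single i (1 : ℝ))).2
        (hf (x + Pi.single i 1))).fun_sub (hf x)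
      have h2 : ω (x + Pi.single i 1) = ω x := by
        simp only [ω, hg_per _ i hi]
      rwa [h2, sub_self] at h1
    have := is_const_of_fderiv_eq_zero (𝕜 := ℝ) (fun x => (hd x).differentiableAt)
      (fun x => (hd x).fderiv) x 0
    simpa using this
  let a : Fin n → ℝ := fun i => if (i : ℕ) < k then f (Pi.single i 1) - f 0 else 0
  let L : (Fin n → ℝ) →L[ℝ] ℝ := ∑ j, a j • P j
  have hL : ∀ j, L (Pi.single j 1) = a j := by
    intro j
    simp [L, P, Pi.single_apply]
  refine ⟨a, fun x => f x - L x, hfs.sub L.contDiff, ?_, ?_, ?_⟩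
  · intro i hi x
    have h1 := hper i hi x
    have h2 : a i = f (Pi.single i 1) - f 0 := if_pos hi
    simp only [map_add, hL]
    linarith
  · intro j hj
    exact if_neg (not_lt.2 hj)
  · intro j x
    rw [((hf x).fun_sub L.hasFDerivAt).fderiv, ContinuousLinearMap.sub_apply, hL, hω_apply]
    simp [Pi.single_apply]
end
end
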